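/- arXiv:1206.3684 — 2 statements merged into one kernel-verified Lean document; each statement's English description precedes it below -/
import Mathlib

section
/- Let 0 < s < 1. For all n, m ∈ ℕ, ∫_{ℝ²} 𝔥_{n,s}(x+iy) · conj(𝔥_{m,s}(x+iy)) · exp(s·x² − y²/s) dx dy = δ_{nm}; that is, the functions 𝔥_{n,s} form an orthonormal family in L²(ℝ², exp(s x² − y²/s) dx dy). -/
open Polynomial MeasureTheory Real

/-- The physicists' Hermite polynomials: `H 0 = 1`, `H (n+1) = 2X * H n - (H n)'`. -/
noncomputable def physHermite : ℕ → Polynomial ℝ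
  | 0 => 1
  | n + 1 => 2 * Polynomial.X * physHermite n - Polynomial.derivative (physHermite n)

/-- The normalization constant `b_n(s) = (π√s/(1−s)) (2(1+s)/(1−s))^n n!`. -/
noncomputable def bn (s : ℝ) (n : ℕ) : ℝ :=
  Real.pi * Real.sqrt s / (1 - s) * (2 * (1 + s) / (1 - s)) ^ n * n.factorial

/-- `𝔥_{n,s}(z) = b_n(s)^{-1/2} e^{-z²/2} H_n(z)`. -/
noncomputable def hns (s : ℝ) (n : ℕ) (z : ℂ) : ℂ :=
  ((Real.sqrt (bn s n) : ℂ))⁻¹ * Complex.exp (-z ^ 2 / 2) *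
    Polynomial.aeval z (physHermite n)

/-!
The factors `e^{-z²/2}` and the weight combine to the anisotropic Gaussian `exp (-(a x² + c y²))`
with `a = 1 - s` and `c = 1/s - 1`; let `⟨p, q⟩` be the inner product of polynomials for it.
Integrating by parts along `1` and along `i` gives
`2 ⟨X p, q⟩ = (1/a - 1/c) ⟨p', q⟩ + (1/a + 1/c) ⟨p, q'⟩`.
Since `1/a - 1/c = 1`, the raising operator `p ↦ 2 X p - p'`, which maps `H_n` to `H_{n+1}`, is
adjoint to `(1/a + 1/c) d/dX`. As `H_{m+1}' = 2 (m + 1) H_m`, induction reduces every inner product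
`⟨H_n, H_m⟩` to the Gaussian integral `⟨1, 1⟩ = π / √(a c)` or to `0`.
-/

open scoped ComplexConjugate

section GaussianIntegrals

variable {a c : ℝ}

theorem integral_complex_eq_integral_integral {E : Type*} [NormedAddCommGroup E] [NormedSpace ℝ E]
    {f : ℂ → E} (hf : Integrable f) :
    ∫ z, f z = ∫ x : ℝ, ∫ y : ℝ, f (x + y * Complex.I) := by
  have hmp := Complex.volume_preserving_equiv_real_prod.symm
  have hme := Complex.measurableEquivRealProd.symm.measurableEmbedding
  rw [← hmp.integral_comp hme, Measure.volume_eq_prod]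
  simpa only [Function.comp_apply, Complex.measurableEquivRealProd_symm_apply,
    Complex.mk_eq_add_mul_I] using integral_prod _ ((hmp.integrable_comp_emb hme).mpr hf)

theorem integrable_norm_pow_mul_exp_neg_mul_norm_sq {b : ℝ} (hb : 0 < b) (n : ℕ) :
    Integrable fun z : ℂ ↦ ‖z‖ ^ n * Real.exp (-b * ‖z‖ ^ 2) := by
  have hn : (-2 : ℝ) < n := by linarith [n.cast_nonneg (α := ℝ)]
  have h := Complex.integral_rpow_mul_exp_neg_mul_rpow one_le_two hn hb
  simp only [Real.rpow_natCast, Real.rpow_two] at h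
  refine .of_integral_ne_zero (h.trans_ne ?_)
  have := Real.Gamma_pos_of_pos (show 0 < ((n : ℝ) + 2) / 2 by positivity)
  positivity

/-- The anisotropic Gaussian weight `exp (-(a x² + c y²))` at `z = x + iy`. -/
noncomputable def planeGaussian (a c : ℝ) (z : ℂ) : ℝ :=
  Real.exp (-(a * z.re ^ 2 + c * z.im ^ 2))

theorem continuous_planeGaussian (a c : ℝ) : Continuous (planeGaussian a c) := by
  unfold planeGaussian
  fun_prop

theorem planeGaussian_le_exp_neg_min_mul_norm_sq (a c : ℝ) (z : ℂ) :
    planeGaussian a c z ≤ Real.exp (-min a c * ‖z‖ ^ 2) := by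
  rw [planeGaussian, Real.exp_le_exp, Complex.sq_norm, Complex.normSq_apply]
  nlinarith [mul_le_mul_of_nonneg_right (min_le_left a c) (sq_nonneg z.re),
    mul_le_mul_of_nonneg_right (min_le_right a c) (sq_nonneg z.im)]

theorem planeGaussian_add_mul_I (a c x y : ℝ) :
    planeGaussian a c (x + y * Complex.I) = Real.exp (-a * x ^ 2) * Real.exp (-c * y ^ 2) := by
  rw [planeGaussian, ← Real.exp_add]
  congr 1
  simp only [Complex.add_re, Complex.add_im, Complex.re_ofReal_mul, Complex.im_ofReal_mul,
    Complex.ofReal_re, Complex.ofReal_im, Complex.I_re, Complex.I_im]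
  ring

-- The derivative of `a x² + c y²` along `v` is written in terms of `z` and `conj z`, so that
-- against `p(z) * conj q(z)` it becomes multiplication of `p` and of `q` by `X`.
theorem hasLineDerivAt_planeGaussian (a c : ℝ) (z v : ℂ) :
    HasLineDerivAt ℝ (fun z ↦ (planeGaussian a c z : ℂ))
      (-(conj (a * v.re + c * v.im * Complex.I) * z +
          (a * v.re + c * v.im * Complex.I) * conj z) * planeGaussian a c z) z v := by
  have hre : HasLineDerivAt ℝ Complex.re v.re z v := Complex.reCLM.hasFDerivAt.hasLineDerivAt v
  have him : HasLineDerivAt ℝ Complex.im v.im z v := Complex.imCLM.hasFDerivAt.hasLineDerivAt v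
  have hreal : HasLineDerivAt ℝ (planeGaussian a c)
      (-(2 * (a * v.re * z.re + c * v.im * z.im)) * planeGaussian a c z) z v := by
    refine (HasDerivAt.exp (HasDerivAt.neg (((HasDerivAt.fun_pow hre 2).const_mul a).add
      ((HasDerivAt.fun_pow him 2).const_mul c)))).congr_deriv ?_
    simp only [planeGaussian, zero_smul, add_zero, Pi.neg_apply, Pi.add_apply]
    ring
  refine (HasDerivAt.ofReal_comp hreal).congr_deriv ?_
  push_cast
  simp only [map_add, map_mul, Complex.conj_ofReal, Complex.conj_I]
  have hadd : z + conj z = 2 * (z.re : ℂ) := by exact_mod_cast Complex.add_conj z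
  have hsub : z - conj z = 2 * (z.im : ℂ) * Complex.I := by exact_mod_cast Complex.sub_conj z
  linear_combination (planeGaussian a c z : ℂ) * (a * v.re * hadd - c * v.im * Complex.I * hsub -
    2 * c * v.im * z.im * Complex.I_sq)

variable {R : Type*} [CommRing R] [Algebra R ℂ]

theorem hasLineDerivAt_aeval_mul_conj_aeval (p q : R[X]) (z v : ℂ) :
    HasLineDerivAt ℝ (fun z ↦ aeval z p * conj (aeval z q))
      (v * (aeval z (derivative p) * conj (aeval z q)) +
        conj v * (aeval z p * conj (aeval z (derivative q)))) z v := by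
  have haeval (r : R[X]) :
      HasLineDerivAt ℝ (fun z ↦ aeval z r) (v * aeval z (derivative r)) z v := by
    simpa using ((r.hasDerivAt_aeval z).hasFDerivAt.restrictScalars ℝ).hasLineDerivAt v
  refine (HasDerivAt.mul (haeval p) (HasDerivAt.star (haeval q))).congr_deriv ?_
  simp only [zero_smul, add_zero, RCLike.star_def, star_mul']
  ring

theorem integrable_aeval_mul_conj_aeval_mul_planeGaussian (ha : 0 < a) (hc : 0 < c) (p q : R[X]) :
    Integrable fun z ↦ aeval z p * conj (aeval z q) * planeGaussian a c z := by
  induction p using Polynomial.induction_on' with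
  | add p₁ p₂ h₁ h₂ => simpa only [map_add, add_mul] using h₁.fun_add h₂
  | monomial i r =>
    induction q using Polynomial.induction_on' with
    | add q₁ q₂ h₁ h₂ => simpa only [map_add, mul_add, add_mul] using h₁.fun_add h₂
    | monomial j t =>
      have hcont := continuous_planeGaussian a c
      refine ((integrable_norm_pow_mul_exp_neg_mul_norm_sq (lt_min ha hc) (i + j)).const_mul
        (‖algebraMap R ℂ r‖ * ‖algebraMap R ℂ t‖)).mono' ?_ (.of_forall fun z ↦ ?_)
      · simp only [aeval_monomial]
        fun_prop
      · have hpos : 0 < planeGaussian a c z := Real.exp_pos _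
        calc ‖aeval z (monomial i r) * conj (aeval z (monomial j t)) * planeGaussian a c z‖
            = ‖algebraMap R ℂ r‖ * ‖algebraMap R ℂ t‖ *
                (‖z‖ ^ (i + j) * planeGaussian a c z) := by
              simp only [aeval_monomial, norm_mul, norm_pow, RCLike.norm_conj, Complex.norm_real,
                Real.norm_of_nonneg hpos.le]
              ring
          _ ≤ _ := by gcongr; exact planeGaussian_le_exp_neg_min_mul_norm_sq a c z

end GaussianIntegrals

section GaussianPairing

variable {a c : ℝ} {R : Type*} [CommRing R] [Algebra R ℂ]

/-- The inner product of polynomials in `L²(ℂ, exp (-(a x² + c y²)) dx dy)`, antilinear in the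
second argument; it is meaningful for `0 < a` and `0 < c`. -/
noncomputable def gaussianPairing (a c : ℝ) (p q : R[X]) : ℂ :=
  ∫ z : ℂ, aeval z p * conj (aeval z q) * planeGaussian a c z

theorem gaussianPairing_conj_symm (a c : ℝ) (p q : R[X]) :
    conj (gaussianPairing a c q p) = gaussianPairing a c p q := by
  simp only [gaussianPairing, ← integral_conj, map_mul, Complex.conj_conj, Complex.conj_ofReal,
    mul_comm (conj (aeval _ q))]

theorem gaussianPairing_sub_left (ha : 0 < a) (hc : 0 < c) (p₁ p₂ q : R[X]) :
    gaussianPairing a c (p₁ - p₂) q = gaussianPairing a c p₁ q - gaussianPairing a c p₂ q := by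
  simp only [gaussianPairing, map_sub, sub_mul]
  exact integral_sub (integrable_aeval_mul_conj_aeval_mul_planeGaussian ha hc p₁ q)
    (integrable_aeval_mul_conj_aeval_mul_planeGaussian ha hc p₂ q)

theorem gaussianPairing_C_mul_left (a c : ℝ) (r : R) (p q : R[X]) :
    gaussianPairing a c (C r * p) q = algebraMap R ℂ r * gaussianPairing a c p q := by
  simp only [gaussianPairing, map_mul, aeval_C, mul_assoc, integral_const_mul]

theorem gaussianPairing_C_mul_right (a c : ℝ) (r : R) (p q : R[X]) :
    gaussianPairing a c p (C r * q) = conj (algebraMap R ℂ r) * gaussianPairing a c p q := by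
  rw [← gaussianPairing_conj_symm, gaussianPairing_C_mul_left, map_mul, gaussianPairing_conj_symm]

theorem gaussianPairing_zero_right (a c : ℝ) (p : R[X]) : gaussianPairing a c p 0 = 0 := by
  simp [gaussianPairing]

theorem gaussianPairing_one_one (ha : 0 < a) (hc : 0 < c) :
    gaussianPairing a c (1 : R[X]) 1 = (π / √(a * c) : ℝ) := by
  have hint := integrable_aeval_mul_conj_aeval_mul_planeGaussian ha hc (1 : R[X]) 1
  rw [gaussianPairing, integral_complex_eq_integral_integral hint]
  simp only [map_one, one_mul, planeGaussian_add_mul_I, integral_complex_ofReal,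
    integral_const_mul, integral_mul_const, integral_gaussian]
  rw [← Real.sqrt_mul (by positivity), div_mul_div_comm, Real.sqrt_div (by positivity),
    Real.sqrt_mul_self pi_nonneg]

theorem integral_mul_planeGaussian_by_parts (ha : 0 < a) (hc : 0 < c) (p q : R[X]) (v : ℂ) :
    ∫ z, (v * (aeval z (derivative p) * conj (aeval z q)) +
        conj v * (aeval z p * conj (aeval z (derivative q)))) * planeGaussian a c z =
      ∫ z, aeval z p * conj (aeval z q) *
        ((conj (a * v.re + c * v.im * Complex.I) * z +
          (a * v.re + c * v.im * Complex.I) * conj z) * planeGaussian a c z) := by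
  set u : ℂ := a * v.re + c * v.im * Complex.I
  have hint := integrable_aeval_mul_conj_aeval_mul_planeGaussian (R := R) ha hc
  have hleft : Integrable fun z ↦ (v * (aeval z (derivative p) * conj (aeval z q)) +
      conj v * (aeval z p * conj (aeval z (derivative q)))) * planeGaussian a c z := by
    refine (((hint (derivative p) q).const_mul v).fun_add
      ((hint p (derivative q)).const_mul (conj v))).congr (.of_forall fun z ↦ ?_)
    ring
  have hright : Integrable fun z ↦ aeval z p * conj (aeval z q) *
      (-(conj u * z + u * conj z) * planeGaussian a c z) := by
    refine (((hint (X * p) q).const_mul (-conj u)).fun_add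
      ((hint p (X * q)).const_mul (-u))).congr (.of_forall fun z ↦ ?_)
    simp only [map_mul, aeval_X]
    ring
  have hparts := integral_bilinear_hasLineDerivAt_right_eq_neg_left_of_integrable
    (B := ContinuousLinearMap.mul ℝ ℂ) hleft hright (hint p q)
    (fun z _ ↦ hasLineDerivAt_aeval_mul_conj_aeval p q z v)
    (fun z _ ↦ hasLineDerivAt_planeGaussian a c z v)
  simpa only [ContinuousLinearMap.mul_apply', neg_mul, mul_neg, integral_neg, neg_inj]
    using hparts.symm

theorem gaussianPairing_integration_by_parts (ha : 0 < a) (hc : 0 < c) (p q : R[X]) (v : ℂ) :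
    v * gaussianPairing a c (derivative p) q + conj v * gaussianPairing a c p (derivative q) =
      conj (a * v.re + c * v.im * Complex.I) * gaussianPairing a c (X * p) q +
        (a * v.re + c * v.im * Complex.I) * gaussianPairing a c p (X * q) := by
  have hint := integrable_aeval_mul_conj_aeval_mul_planeGaussian (R := R) ha hc
  simp only [gaussianPairing, ← integral_const_mul]
  rw [← integral_add ((hint _ _).const_mul _) ((hint _ _).const_mul _),
    ← integral_add ((hint _ _).const_mul _) ((hint _ _).const_mul _)]
  convert integral_mul_planeGaussian_by_parts ha hc p q v using 3 with z z
  · ring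
  · simp only [map_mul, aeval_X]
    ring

theorem two_mul_gaussianPairing_X_mul_left (ha : 0 < a) (hc : 0 < c) (p q : R[X]) :
    2 * gaussianPairing a c (X * p) q = (a⁻¹ - c⁻¹) * gaussianPairing a c (derivative p) q +
      (a⁻¹ + c⁻¹) * gaussianPairing a c p (derivative q) := by
  have ha' : (a : ℂ) ≠ 0 := by exact_mod_cast ha.ne'
  have hc' : (c : ℂ) ≠ 0 := by exact_mod_cast hc.ne'
  have hre : gaussianPairing a c (derivative p) q + gaussianPairing a c p (derivative q) =
      a * (gaussianPairing a c (X * p) q + gaussianPairing a c p (X * q)) := by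
    simpa [mul_add] using gaussianPairing_integration_by_parts ha hc p q 1
  have him : gaussianPairing a c (derivative p) q - gaussianPairing a c p (derivative q) =
      -c * (gaussianPairing a c (X * p) q - gaussianPairing a c p (X * q)) := by
    have h := gaussianPairing_integration_by_parts ha hc p q Complex.I
    simp only [Complex.conj_I, Complex.I_re, Complex.I_im, map_mul, Complex.conj_ofReal,
      Complex.ofReal_zero, Complex.ofReal_one, mul_zero, mul_one, zero_add] at h
    apply mul_left_cancel₀ Complex.I_ne_zero
    linear_combination h
  push_cast
  field_simp
  linear_combination (-c : ℂ) * hre + a * him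

theorem gaussianPairing_two_mul_X_mul_sub_derivative_left (ha : 0 < a) (hc : 0 < c)
    (hac : a⁻¹ - c⁻¹ = 1) (p q : R[X]) :
    gaussianPairing a c (2 * X * p - derivative p) q =
      (a⁻¹ + c⁻¹) * gaussianPairing a c p (derivative q) := by
  have hac' : (a⁻¹ - c⁻¹ : ℂ) = 1 := by exact_mod_cast hac
  have htwo : (2 * X * p : R[X]) = C 2 * (X * p) := by rw [map_ofNat, mul_assoc]
  rw [gaussianPairing_sub_left ha hc, htwo, gaussianPairing_C_mul_left, map_ofNat,
    two_mul_gaussianPairing_X_mul_left ha hc, hac']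
  ring

end GaussianPairing

section Hermite

theorem derivative_physHermite_succ (n : ℕ) :
    derivative (physHermite (n + 1)) = C (2 * (n + 1) : ℝ) * physHermite n := by
  induction n with
  | zero => simp [physHermite, map_ofNat C 2]
  | succ n ih =>
    rw [physHermite, derivative_sub, ih, derivative_C_mul, derivative_mul, ih]
    simp only [physHermite, derivative_mul, derivative_ofNat, derivative_X, map_mul, map_add,
      map_natCast, map_ofNat C 2, map_one, Nat.cast_add, Nat.cast_one]
    ring

theorem gaussianPairing_physHermite {a c : ℝ} (ha : 0 < a) (hc : 0 < c) (hac : a⁻¹ - c⁻¹ = 1)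
    (n m : ℕ) :
    gaussianPairing a c (physHermite n) (physHermite m) =
      if n = m then ((π / √(a * c) * (2 * (a⁻¹ + c⁻¹)) ^ n * n.factorial : ℝ) : ℂ) else 0 := by
  have raise_left (k : ℕ) (q : ℝ[X]) : gaussianPairing a c (physHermite (k + 1)) q =
      (a⁻¹ + c⁻¹) * gaussianPairing a c (physHermite k) (derivative q) :=
    gaussianPairing_two_mul_X_mul_sub_derivative_left ha hc hac (physHermite k) q
  have succ_zero (k : ℕ) : gaussianPairing a c (physHermite (k + 1)) (physHermite 0) = 0 := by
    rw [raise_left, physHermite, derivative_one, gaussianPairing_zero_right, mul_zero]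
  induction n generalizing m with
  | zero =>
    cases m with
    | zero => simp [physHermite, gaussianPairing_one_one ha hc]
    | succ m => rw [← gaussianPairing_conj_symm, succ_zero, map_zero, if_neg m.succ_ne_zero.symm]
  | succ n ih =>
    cases m with
    | zero => simp [succ_zero]
    | succ m =>
      rw [raise_left, derivative_physHermite_succ, gaussianPairing_C_mul_right, ih]
      simp only [add_left_inj]
      split_ifs with hnm
      · subst hnm
        simp only [Complex.coe_algebraMap, Complex.conj_ofReal, Nat.factorial_succ]
        push_cast
        ring
      · simp

theorem bn_pos {s : ℝ} (hs0 : 0 < s) (hs1 : s < 1) (n : ℕ) : 0 < bn s n := by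
  have := sub_pos.mpr hs1
  unfold bn
  positivity

theorem gaussianPairing_physHermite_eq_bn {s : ℝ} (hs0 : 0 < s) (hs1 : s < 1) (n m : ℕ) :
    gaussianPairing (1 - s) (s⁻¹ - 1) (physHermite n) (physHermite m) =
      if n = m then (bn s n : ℂ) else 0 := by
  have ha : 0 < 1 - s := sub_pos.mpr hs1
  have hc : 0 < s⁻¹ - 1 := sub_pos.mpr ((one_lt_inv₀ hs0).mpr hs1)
  have hcinv : (s⁻¹ - 1)⁻¹ = s / (1 - s) := by
    rw [← inv_div]
    congr 1
    field_simp
  have hdiff : (1 - s)⁻¹ - (s⁻¹ - 1)⁻¹ = 1 := by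
    rw [hcinv]
    field_simp
  have hsum : (1 - s)⁻¹ + (s⁻¹ - 1)⁻¹ = (1 + s) / (1 - s) := by
    rw [hcinv]
    field_simp
  have hsqrt : √((1 - s) * (s⁻¹ - 1)) = (1 - s) / √s := by
    rw [show (1 - s) * (s⁻¹ - 1) = (1 - s) ^ 2 / s by field_simp, Real.sqrt_div (sq_nonneg _),
      Real.sqrt_sq ha.le]
  rw [gaussianPairing_physHermite ha hc hdiff, hsum, hsqrt, div_div_eq_mul_div, ← mul_div_assoc,
    bn]

theorem hns_mul_conj_hns_mul_exp (s : ℝ) (n m : ℕ) (z : ℂ) :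
    hns s n z * conj (hns s m z) * (Real.exp (s * z.re ^ 2 - z.im ^ 2 / s) : ℂ) =
      (√(bn s n) : ℂ)⁻¹ * (√(bn s m) : ℂ)⁻¹ * (aeval z (physHermite n) *
        conj (aeval z (physHermite m)) * planeGaussian (1 - s) (s⁻¹ - 1) z) := by
  have hexp : Complex.exp (-z ^ 2 / 2) * conj (Complex.exp (-z ^ 2 / 2)) *
      (Real.exp (s * z.re ^ 2 - z.im ^ 2 / s) : ℂ) = planeGaussian (1 - s) (s⁻¹ - 1) z := by
    rw [planeGaussian, Complex.mul_conj, Complex.normSq_eq_norm_sq, Complex.norm_exp,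
      ← Complex.ofReal_mul, ← Real.exp_nat_mul, ← Real.exp_add]
    congr 2
    simp only [pow_two, Complex.div_ofNat_re, Complex.neg_re, Complex.mul_re]
    ring
  simp only [hns, map_mul, map_inv₀, Complex.conj_ofReal, ← hexp]
  ring

theorem integrable_hns_mul_conj_hns_mul_exp {s : ℝ} (hs0 : 0 < s) (hs1 : s < 1) (n m : ℕ) :
    Integrable fun z : ℂ ↦
      hns s n z * conj (hns s m z) * (Real.exp (s * z.re ^ 2 - z.im ^ 2 / s) : ℂ) := by
  simp only [hns_mul_conj_hns_mul_exp]
  exact (integrable_aeval_mul_conj_aeval_mul_planeGaussian (sub_pos.mpr hs1)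
    (sub_pos.mpr ((one_lt_inv₀ hs0).mpr hs1)) _ _).const_mul _

theorem integral_hns_mul_conj_hns_mul_exp {s : ℝ} (hs0 : 0 < s) (hs1 : s < 1) (n m : ℕ) :
    ∫ z : ℂ, hns s n z * conj (hns s m z) * (Real.exp (s * z.re ^ 2 - z.im ^ 2 / s) : ℂ) =
      if n = m then 1 else 0 := by
  simp only [hns_mul_conj_hns_mul_exp, integral_const_mul]
  rw [← gaussianPairing, gaussianPairing_physHermite_eq_bn hs0 hs1]
  split_ifs with hnm
  · have hbn := bn_pos hs0 hs1 n
    rw [← hnm, ← mul_inv, ← Complex.ofReal_mul, Real.mul_self_sqrt hbn.le]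
    exact inv_mul_cancel₀ (Complex.ofReal_ne_zero.mpr hbn.ne')
  · exact mul_zero _

end Hermite

theorem hns_orthonormal (s : ℝ) (hs0 : 0 < s) (hs1 : s < 1) (n m : ℕ) :
    (∫ x : ℝ, ∫ y : ℝ,
        hns s n ((x : ℂ) + y * Complex.I) *
          (starRingEnd ℂ) (hns s m ((x : ℂ) + y * Complex.I)) *
          (Real.exp (s * x ^ 2 - y ^ 2 / s) : ℂ))
      = if n = m then 1 else 0 := by
  rw [← integral_hns_mul_conj_hns_mul_exp hs0 hs1 n m,
    integral_complex_eq_integral_integral (integrable_hns_mul_conj_hns_mul_exp hs0 hs1 n m)]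
  simp only [Complex.add_re, Complex.add_im, Complex.re_ofReal_mul, Complex.im_ofReal_mul,
    Complex.ofReal_re, Complex.ofReal_im, Complex.I_re, Complex.I_im, mul_zero, mul_one, add_zero,
    zero_add]
end

section
/- Let 0 < s < 1. For every quaternion q ∈ ℍ, writing x = Re(q) and y = ‖Im(q)‖, the series ∑_{n=0}^∞ b_n(s)^{−1} · H_n(q) · star(H_n(q)) converges in ℍ, and its sum equals the real scalar ((1−s²)/(2πs)) · exp( (1−s)·x² + ((1−s)/s)·y² ) times the identity; that is, the diagonal quaternionic kernel K_s(q, conj q) equals K_s(z_q, conj z_q)·1 with z_q = x + iy. -/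
open Quaternion Polynomial Real

/-!
By Stein's identity, `H n (z) = E (2 (z + iU)) ^ n` for `U` centred Gaussian of variance `1 / 2`.
For independent copies `U`, `V`, summing the exponential series under the expectation turns
`∑ (t / 2) ^ n / n! * H n (z) * H n (w)` into `E exp (2 t (z + iU) (w + iV))`, a Gaussian integral
whose value is Mehler's formula. A quaternion `q` is the image of `z_q` under a `⋆`-embedding of `ℂ`
into the quaternions, so `H n (q) * star (H n (q)) = |H n (z_q)| ^ 2`, and the kernel is Mehler's
formula for `w = conj z_q` and `t = (1 - s) / (1 + s)`.
-/

open MeasureTheory ProbabilityTheory ComplexConjugate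
open scoped NNReal

section ExponentialSeries

lemma hasSum_integral_pow_div_factorial {Ω : Type*} [MeasurableSpace Ω] {μ : Measure Ω}
    {X : Ω → ℂ} (hX : AEStronglyMeasurable X μ) (hexp : Integrable (fun ω ↦ exp ‖X ω‖) μ) :
    HasSum (fun n : ℕ ↦ (∫ ω, X ω ^ n ∂μ) / n.factorial) (∫ ω, Complex.exp (X ω) ∂μ) := by
  have hnorm (ω : Ω) : HasSum (fun n : ℕ ↦ ‖X ω‖ ^ n / n.factorial) (exp ‖X ω‖) := by
    rw [exp_eq_exp_ℝ]
    exact NormedSpace.expSeries_div_hasSum_exp ‖X ω‖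
  have hval (ω : Ω) : HasSum (fun n : ℕ ↦ X ω ^ n / n.factorial) (Complex.exp (X ω)) := by
    rw [Complex.exp_eq_exp_ℂ]
    exact NormedSpace.expSeries_div_hasSum_exp (X ω)
  simp only [← integral_div]
  refine hasSum_integral_of_dominated_convergence (fun n ω ↦ ‖X ω‖ ^ n / n.factorial)
    (fun n ↦ (hX.fun_pow n).mul_const _) (fun n ↦ ae_of_all _ fun ω ↦ ?_)
    (ae_of_all _ fun ω ↦ (hnorm ω).summable) ?_ (ae_of_all _ hval)
  · simp
  · simpa only [(hnorm _).tsum_eq] using hexp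

end ExponentialSeries

section ComplexPower

lemma ofReal_mul_cpow {r : ℝ} (hr : 0 ≤ r) (w a : ℂ) :
    ((r : ℂ) * w) ^ a = (r : ℂ) ^ a * w ^ a := by
  rcases hr.eq_or_lt with rfl | hr
  · rcases eq_or_ne a 0 with rfl | ha
    · simp
    · simp [Complex.zero_cpow ha]
  rcases eq_or_ne w 0 with rfl | hw
  · rcases eq_or_ne a 0 with rfl | ha
    · simp
    · simp [Complex.zero_cpow ha]
  have hr' : (r : ℂ) ≠ 0 := by exact_mod_cast hr.ne'
  rw [Complex.cpow_def_of_ne_zero (mul_ne_zero hr' hw), Complex.log_ofReal_mul hr hw,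
    Complex.ofReal_log hr.le, add_mul, Complex.exp_add, ← Complex.cpow_def_of_ne_zero hr',
    ← Complex.cpow_def_of_ne_zero hw]

lemma ofReal_cpow_one_half {r : ℝ} (hr : 0 ≤ r) : (r : ℂ) ^ (1 / 2 : ℂ) = √r := by
  rw [sqrt_eq_rpow, Complex.ofReal_cpow hr]
  norm_num

lemma inv_cpow_of_re_pos {w : ℂ} (hw : 0 < w.re) (a : ℂ) : w⁻¹ ^ a = w ^ (-a) := by
  have harg : w.arg ≠ π := fun h ↦ (Complex.arg_eq_pi_iff.mp h).1.not_gt hw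
  rw [Complex.inv_cpow _ _ harg, Complex.cpow_neg]

end ComplexPower

section Gaussian

variable {E : Type*} [NormedAddCommGroup E] [NormedSpace ℝ E] {m : ℝ} {v : ℝ≥0}

lemma integrable_gaussianReal_iff {f : ℝ → E} (hv : v ≠ 0) :
    Integrable f (gaussianReal m v) ↔ Integrable (fun x ↦ gaussianPDFReal m v x • f x) := by
  rw [gaussianReal_of_var_ne_zero m hv,
    integrable_withDensity_iff_integrable_smul' (measurable_gaussianPDF m v)
      (ae_of_all _ fun _ ↦ gaussianPDF_lt_top)]
  simp only [toReal_gaussianPDF]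

lemma hasDerivAt_gaussianPDFReal (m : ℝ) (v : ℝ≥0) (x : ℝ) :
    HasDerivAt (gaussianPDFReal m v) (-((x - m) / v) * gaussianPDFReal m v x) x := by
  have hexponent : HasDerivAt (fun y : ℝ ↦ -(y - m) ^ 2 / (2 * v)) (-((x - m) / v)) x := by
    refine ((((hasDerivAt_id' x).sub_const m).fun_pow 2).fun_neg.div_const (2 * v : ℝ)).congr_deriv
      ?_
    simp only [Nat.cast_ofNat, Nat.add_one_sub_one, pow_one, mul_one, neg_div]
    rw [mul_div_mul_left _ _ two_ne_zero]
  exact (hexponent.exp.const_mul (√(2 * π * v))⁻¹).congr_deriv (by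
    rw [gaussianPDFReal]; ring)

theorem integral_sub_smul_gaussianReal [CompleteSpace E] {f f' : ℝ → E}
    (hderiv : ∀ x, HasDerivAt f (f' x) x) (hf : Integrable f (gaussianReal m v))
    (hf' : Integrable f' (gaussianReal m v))
    (hxf : Integrable (fun x ↦ (x - m) • f x) (gaussianReal m v)) :
    ∫ x, (x - m) • f x ∂gaussianReal m v = (v : ℝ) • ∫ x, f' x ∂gaussianReal m v := by
  rcases eq_or_ne v 0 with rfl | hv
  · simp [gaussianReal_zero_var]
  have hv' : (v : ℝ) ≠ 0 := NNReal.coe_ne_zero.mpr hv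
  have hxf' : Integrable (fun x ↦ (v : ℝ)⁻¹ • (x - m) • f x) (gaussianReal m v) := hxf.smul _
  have hzero : ∫ x, f' x - (v : ℝ)⁻¹ • (x - m) • f x ∂gaussianReal m v = 0 := by
    rw [integral_gaussianReal_eq_integral_smul hv]
    refine integral_eq_zero_of_hasDerivAt_of_integrable
      (fun x ↦ ((hasDerivAt_gaussianPDFReal m v x).fun_smul (hderiv x)).congr_deriv ?_)
      ((integrable_gaussianReal_iff hv).mp (hf'.sub hxf')) ((integrable_gaussianReal_iff hv).mp hf)
    module
  rw [integral_sub hf' hxf', integral_smul, sub_eq_zero] at hzero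
  rw [hzero, smul_inv_smul₀ hv']

section Quadratic

variable {b : ℂ}

lemma gaussianPDFReal_smul_cexp_quadratic (hv : v ≠ 0) (b c d : ℂ) (x : ℝ) :
    gaussianPDFReal 0 v x • Complex.exp (b * x ^ 2 + c * x + d) =
      (√(2 * π * v) : ℂ)⁻¹ *
        Complex.exp (-((1 - 2 * v * b) / (2 * v : ℝ)) * x ^ 2 + c * x + d) := by
  have hv' : (v : ℂ) ≠ 0 := by exact_mod_cast hv
  rw [gaussianPDFReal, Complex.real_smul, Complex.ofReal_mul, mul_assoc, Complex.ofReal_exp,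
    ← Complex.exp_add, Complex.ofReal_inv]
  congr 2
  push_cast
  field_simp
  ring

lemma re_one_sub_two_mul_pos (hb : 2 * v * b.re < 1) : 0 < (1 - 2 * v * b : ℂ).re := by
  have hre : (2 * v * b : ℂ).re = 2 * v * b.re := by
    simp [mul_assoc]
  rw [Complex.sub_re, hre, Complex.one_re]
  exact sub_pos.mpr hb

lemma re_neg_one_sub_two_mul_div_neg (hv : v ≠ 0) (hb : 2 * v * b.re < 1) :
    (-((1 - 2 * v * b) / (2 * v : ℝ)) : ℂ).re < 0 := by
  rw [Complex.neg_re, Complex.div_ofReal_re, neg_lt_zero]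
  exact div_pos (re_one_sub_two_mul_pos hb) (by positivity)

lemma integrable_cexp_quadratic_gaussianReal (hb : 2 * v * b.re < 1) (c d : ℂ) :
    Integrable (fun x : ℝ ↦ Complex.exp (b * x ^ 2 + c * x + d)) (gaussianReal 0 v) := by
  rcases eq_or_ne v 0 with rfl | hv
  · rw [gaussianReal_zero_var]
    exact integrable_dirac (by simp)
  rw [integrable_gaussianReal_iff hv]
  simp only [gaussianPDFReal_smul_cexp_quadratic hv]
  exact (integrable_cexp_quadratic' (re_neg_one_sub_two_mul_div_neg hv hb) c d).const_mul _

theorem integral_cexp_quadratic_gaussianReal (hb : 2 * v * b.re < 1) (c d : ℂ) :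
    ∫ x : ℝ, Complex.exp (b * x ^ 2 + c * x + d) ∂gaussianReal 0 v =
      (1 - 2 * v * b) ^ (-1 / 2 : ℂ) *
        Complex.exp (v * c ^ 2 / (2 * (1 - 2 * v * b)) + d) := by
  rcases eq_or_ne v 0 with rfl | hv
  · simp [gaussianReal_zero_var]
  have hre := re_one_sub_two_mul_pos hb
  have hne : 1 - 2 * v * b ≠ 0 := fun h ↦ hre.ne' (by rw [h, Complex.zero_re])
  rw [integral_gaussianReal_eq_integral_smul hv]
  simp only [gaussianPDFReal_smul_cexp_quadratic hv]
  rw [integral_const_mul, integral_cexp_quadratic (re_neg_one_sub_two_mul_div_neg hv hb),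
    ← mul_assoc]
  congr 2
  · have hsqrt : (√(2 * π * v) : ℂ) ≠ 0 := by
      exact_mod_cast (sqrt_pos.mpr (by positivity)).ne'
    rw [neg_neg, div_div_eq_mul_div, ← Complex.ofReal_mul, div_eq_mul_inv,
      ofReal_mul_cpow (by positivity), ofReal_cpow_one_half (by positivity),
      inv_cpow_of_re_pos hre, mul_left_comm π, ← mul_assoc 2, inv_mul_cancel_left₀ hsqrt, neg_div]
  · push_cast
    field_simp
    ring

end Quadratic

end Gaussian

section HermiteIntegral

lemma derivative_physHermite (n : ℕ) :
    derivative (physHermite n) = 2 * (n : ℝ[X]) * physHermite (n - 1) := by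
  induction n with
  | zero => simp [physHermite]
  | succ n ih =>
    have hrec : (n : ℝ[X]) * physHermite n =
        (n : ℝ[X]) * (2 * X * physHermite (n - 1) - derivative (physHermite (n - 1))) := by
      cases n with
      | zero => simp
      | succ n => rfl
    have hsecond : derivative (derivative (physHermite n)) =
        2 * (n : ℝ[X]) * derivative (physHermite (n - 1)) := by
      rw [ih]; simp [derivative_mul]
    have hfirst : derivative (2 * X * physHermite n) =
        2 * physHermite n + 2 * X * derivative (physHermite n) := by
      simp [derivative_mul]
    rw [physHermite, derivative_sub, hsecond, hfirst, ih, Nat.add_sub_cancel]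
    push_cast
    linear_combination -2 * hrec

lemma physHermite_succ (n : ℕ) :
    physHermite (n + 1) = 2 * X * physHermite n - 2 * (n : ℝ[X]) * physHermite (n - 1) := by
  rw [physHermite, derivative_physHermite]

/-- The centred Gaussian measure of variance `1 / 2`, of density `exp (-u ^ 2) / √π`: the variance
at which Gaussian averages of monomials are the physicists' Hermite polynomials. -/
noncomputable abbrev hermiteGaussian : Measure ℝ := gaussianReal 0 (1 / 2)

lemma integrable_two_mul_add_I_mul_pow (z : ℂ) (v : ℝ≥0) (n : ℕ) :
    Integrable (fun u : ℝ ↦ (2 * (z + Complex.I * u)) ^ n) (gaussianReal 0 v) := by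
  have hLp : MemLp (fun u : ℝ ↦ 2 * (z + Complex.I * u)) n (gaussianReal 0 v) :=
    ((memLp_const z).add ((memLp_id_gaussianReal n).ofReal.const_mul Complex.I)).const_mul 2
  exact hLp.integrable_norm_pow'.mono' (by fun_prop) (ae_of_all _ fun u ↦ (norm_pow _ n).le)

lemma integral_two_mul_add_I_mul_pow_succ (z : ℂ) (n : ℕ) :
    ∫ u : ℝ, (2 * (z + Complex.I * u)) ^ (n + 1) ∂hermiteGaussian =
      2 * z * ∫ u : ℝ, (2 * (z + Complex.I * u)) ^ n ∂hermiteGaussian -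
        2 * n * ∫ u : ℝ, (2 * (z + Complex.I * u)) ^ (n - 1) ∂hermiteGaussian := by
  have hpow := integrable_two_mul_add_I_mul_pow z (1 / 2)
  have hderiv (u : ℝ) : HasDerivAt (fun u : ℝ ↦ (2 * (z + Complex.I * u)) ^ n)
      (2 * n * Complex.I * (2 * (z + Complex.I * u)) ^ (n - 1)) u := by
    refine ((((hasDerivAt_id u).ofReal_comp.const_mul Complex.I).const_add z).const_mul 2
      |>.fun_pow n).congr_deriv ?_
    simp only [id_eq, Complex.ofReal_one, mul_one]
    ring
  have hsplit (u : ℝ) : (2 * (z + Complex.I * u)) ^ (n + 1) =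
      2 * z * (2 * (z + Complex.I * u)) ^ n +
        2 * Complex.I * ((u - 0) • (2 * (z + Complex.I * u)) ^ n) := by
    rw [sub_zero, Complex.real_smul]; ring
  have hsmul : Integrable (fun u : ℝ ↦ (u - 0) • (2 * (z + Complex.I * u)) ^ n)
      hermiteGaussian := by
    refine (((hpow (n + 1)).sub ((hpow n).const_mul (2 * z))).const_mul
      (2 * Complex.I)⁻¹).congr (ae_of_all _ fun u ↦ ?_)
    simp only [Pi.sub_apply]
    rw [hsplit, add_sub_cancel_left,
      inv_mul_cancel_left₀ (mul_ne_zero two_ne_zero Complex.I_ne_zero)]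
  have hstein := integral_sub_smul_gaussianReal hderiv (hpow n) ((hpow (n - 1)).const_mul _) hsmul
  simp only [hsplit]
  rw [integral_add ((hpow n).const_mul _) (hsmul.const_mul _), integral_const_mul,
    integral_const_mul, hstein, integral_const_mul, Complex.real_smul]
  push_cast
  linear_combination (2 * n * ∫ u : ℝ, (2 * (z + Complex.I * u)) ^ (n - 1) ∂hermiteGaussian) *
    Complex.I_mul_I

theorem aeval_physHermite_eq_integral (n : ℕ) (z : ℂ) :
    aeval z (physHermite n) = ∫ u : ℝ, (2 * (z + Complex.I * u)) ^ n ∂hermiteGaussian := by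
  induction n using Nat.strong_induction_on with
  | _ n ih =>
    cases n with
    | zero => simp [physHermite]
    | succ n =>
      rw [integral_two_mul_add_I_mul_pow_succ, physHermite_succ, ← ih n n.lt_succ_self,
        ← ih (n - 1) (by lia)]
      simp [map_ofNat (aeval z) 2]

end HermiteIntegral

section Mehler

variable {t : ℂ}

lemma integrable_exp_mul_sq_norm {r : ℝ} (hr : r < 1) (z : ℂ) :
    Integrable (fun u : ℝ ↦ exp (r * ‖z + Complex.I * u‖ ^ 2)) hermiteGaussian := by
  refine (integrable_cexp_quadratic_gaussianReal (b := r) (by simpa using hr)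
    (2 * r * z.im : ℝ) (r * ‖z‖ ^ 2 : ℝ)).norm.congr (ae_of_all _ fun u ↦ ?_)
  have hsq : r * ‖z + Complex.I * u‖ ^ 2 = r * u ^ 2 + (2 * r * z.im) * u + r * ‖z‖ ^ 2 := by
    simp only [Complex.sq_norm, Complex.normSq_apply, Complex.add_re, Complex.add_im,
      Complex.I_mul_re, Complex.I_mul_im, Complex.ofReal_re, Complex.ofReal_im]
    ring
  simp only [Complex.norm_exp, hsq]
  norm_cast

lemma integrable_exp_norm_mul (ht : ‖t‖ < 1) (z w : ℂ) :
    Integrable (fun p : ℝ × ℝ ↦ exp ‖2 * t * (z + Complex.I * p.1) * (w + Complex.I * p.2)‖)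
      (hermiteGaussian.prod hermiteGaussian) := by
  refine ((integrable_exp_mul_sq_norm ht z).mul_prod (integrable_exp_mul_sq_norm ht w)).mono'
    (by fun_prop) (ae_of_all _ fun p ↦ ?_)
  rw [norm_of_nonneg (exp_pos _).le, ← exp_add, exp_le_exp, ← mul_add]
  calc ‖2 * t * (z + Complex.I * p.1) * (w + Complex.I * p.2)‖
      = ‖t‖ * (2 * ‖z + Complex.I * p.1‖ * ‖w + Complex.I * p.2‖) := by
        simp only [norm_mul, Complex.norm_ofNat]; ring
    _ ≤ ‖t‖ * (‖z + Complex.I * p.1‖ ^ 2 + ‖w + Complex.I * p.2‖ ^ 2) := by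
        gcongr; exact two_mul_le_add_sq _ _

lemma integral_cexp_two_mul_mul (a z : ℂ) :
    ∫ u : ℝ, Complex.exp (2 * a * (z + Complex.I * u)) ∂hermiteGaussian =
      Complex.exp (2 * a * z - a ^ 2) := by
  have hexponent (u : ℝ) : 2 * a * (z + Complex.I * u) =
      0 * (u : ℂ) ^ 2 + 2 * a * Complex.I * u + 2 * a * z := by
    ring
  simp only [hexponent]
  rw [integral_cexp_quadratic_gaussianReal (by simp), mul_zero, sub_zero, Complex.one_cpow,
    one_mul]
  congr 1
  push_cast
  linear_combination a ^ 2 * Complex.I_mul_I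

lemma re_sq_lt_one_of_norm_lt_one (ht : ‖t‖ < 1) : (t ^ 2).re < 1 :=
  (Complex.re_le_norm _).trans_lt (by
    rw [norm_pow]; exact pow_lt_one₀ (norm_nonneg t) ht two_ne_zero)

lemma integral_prod_cexp_two_mul_mul (ht : ‖t‖ < 1) (z w : ℂ) :
    ∫ p : ℝ × ℝ, Complex.exp (2 * t * (z + Complex.I * p.1) * (w + Complex.I * p.2))
        ∂hermiteGaussian.prod hermiteGaussian =
      (1 - t ^ 2) ^ (-1 / 2 : ℂ) *
        Complex.exp ((2 * t * z * w - t ^ 2 * (z ^ 2 + w ^ 2)) / (1 - t ^ 2)) := by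
  have hint : Integrable (fun p : ℝ × ℝ ↦
      Complex.exp (2 * t * (z + Complex.I * p.1) * (w + Complex.I * p.2)))
      (hermiteGaussian.prod hermiteGaussian) :=
    (integrable_exp_norm_mul ht z w).mono' (by fun_prop)
      (ae_of_all _ fun p ↦ Complex.norm_exp_le_exp_norm _)
  have hinner (u : ℝ) :
      ∫ v : ℝ, Complex.exp (2 * t * (z + Complex.I * u) * (w + Complex.I * v)) ∂hermiteGaussian =
      Complex.exp (t ^ 2 * u ^ 2 + 2 * t * Complex.I * (w - t * z) * u +
        (2 * t * z * w - t ^ 2 * z ^ 2)) := by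
    rw [mul_assoc 2 t, integral_cexp_two_mul_mul]
    congr 1
    linear_combination -(t ^ 2 * u ^ 2) * Complex.I_mul_I
  have hre := re_sq_lt_one_of_norm_lt_one ht
  have hne : 1 - t ^ 2 ≠ 0 := fun h ↦ hre.ne (by rw [← sub_eq_zero.mp h, Complex.one_re])
  rw [integral_prod _ hint]
  simp only [hinner]
  rw [integral_cexp_quadratic_gaussianReal (by simpa using hre)]
  push_cast
  rw [mul_one_div_cancel two_ne_zero, one_mul]
  congr 2
  field_simp
  linear_combination (t ^ 2 * (w - t * z) ^ 2) * Complex.I_mul_I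

theorem hasSum_physHermite_mul_physHermite (ht : ‖t‖ < 1) (z w : ℂ) :
    HasSum (fun n : ℕ ↦ (t / 2) ^ n / n.factorial *
        (aeval z (physHermite n) * aeval w (physHermite n)))
      ((1 - t ^ 2) ^ (-1 / 2 : ℂ) *
        Complex.exp ((2 * t * z * w - t ^ 2 * (z ^ 2 + w ^ 2)) / (1 - t ^ 2))) := by
  rw [← integral_prod_cexp_two_mul_mul ht]
  refine (hasSum_integral_pow_div_factorial (by fun_prop)
    (integrable_exp_norm_mul ht z w)).congr_fun fun n ↦ ?_
  have hpow (p : ℝ × ℝ) : (2 * t * (z + Complex.I * p.1) * (w + Complex.I * p.2)) ^ n =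
      (t / 2) ^ n * ((2 * (z + Complex.I * p.1)) ^ n * (2 * (w + Complex.I * p.2)) ^ n) := by
    rw [← mul_pow, ← mul_pow]; ring
  simp only [hpow]
  rw [integral_const_mul, integral_prod_mul (fun u : ℝ ↦ (2 * (z + Complex.I * u)) ^ n)
    (fun u : ℝ ↦ (2 * (w + Complex.I * u)) ^ n), ← aeval_physHermite_eq_integral,
    ← aeval_physHermite_eq_integral]
  ring

theorem hasSum_normSq_aeval_physHermite {r : ℝ} (hr : |r| < 1) (z : ℂ) :
    HasSum (fun n : ℕ ↦ (r / 2) ^ n / n.factorial * Complex.normSq (aeval z (physHermite n)))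
      ((√(1 - r ^ 2))⁻¹ *
        exp (2 * r / (1 + r) * z.re ^ 2 + 2 * r / (1 - r) * z.im ^ 2)) := by
  have hr_add : 1 + r ≠ 0 := by linarith [(abs_lt.mp hr).1]
  have hr_sub : 1 - r ≠ 0 := by linarith [(abs_lt.mp hr).2]
  have hprefactor : (1 - (r : ℂ) ^ 2) ^ (-1 / 2 : ℂ) = (√(1 - r ^ 2))⁻¹ := by
    have hnonneg : 0 ≤ 1 - r ^ 2 := by linarith [(sq_lt_one_iff_abs_lt_one r).mpr hr]
    rw [neg_div, Complex.cpow_neg, Complex.ofReal_inv, ← ofReal_cpow_one_half hnonneg]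
    push_cast
    rfl
  have hexponent : (2 * r * z * conj z - r ^ 2 * (z ^ 2 + conj z ^ 2)) / (1 - r ^ 2) =
      ((2 * r / (1 + r) * z.re ^ 2 + 2 * r / (1 - r) * z.im ^ 2 : ℝ) : ℂ) := by
    have hmul : z * conj z = ((z.re ^ 2 + z.im ^ 2 : ℝ) : ℂ) := by
      rw [Complex.mul_conj, Complex.normSq_apply, ← sq, ← sq]
    have hsq : z ^ 2 + conj z ^ 2 = ((2 * (z.re ^ 2 - z.im ^ 2) : ℝ) : ℂ) := by
      apply Complex.ext <;> simp [sq] <;> ring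
    have hr_sq : 1 - r ^ 2 ≠ 0 := by
      rw [← one_pow 2, sq_sub_sq]
      exact mul_ne_zero hr_add hr_sub
    rw [mul_assoc, hmul, hsq]
    norm_cast
    field_simp
    ring
  rw [← Complex.hasSum_ofReal]
  have hmehler := hasSum_physHermite_mul_physHermite (t := r) (by simpa using hr) z (conj z)
  rw [hprefactor, hexponent] at hmehler
  simpa only [aeval_conj, Complex.mul_conj, Complex.ofReal_mul, Complex.ofReal_div,
    Complex.ofReal_pow, Complex.ofReal_ofNat, Complex.ofReal_natCast, Complex.ofReal_exp]
    using hmehler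

end Mehler

section Slice

lemma exists_mul_self_eq_neg_one_and_smul_eq_im (q : ℍ[ℝ]) :
    ∃ u : ℍ[ℝ], u * u = -1 ∧ ‖q.im‖ • u = q.im := by
  rcases eq_or_ne q.im 0 with h | h
  · refine ⟨(Complex.I : ℂ), ?_, by rw [h, norm_zero, zero_smul]⟩
    rw [← coeComplex_mul, Complex.I_mul_I]
    ext <;> simp
  · have hnorm : ‖q.im‖ ≠ 0 := norm_ne_zero_iff.mpr h
    refine ⟨‖q.im‖⁻¹ • q.im, ?_, smul_inv_smul₀ hnorm _⟩
    have hsq : q.im * q.im = (-(‖q.im‖ * ‖q.im‖)) • (1 : ℍ[ℝ]) := by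
      rw [← sq q.im, im_sq, normSq_eq_norm_mul_self, neg_smul, ← Quaternion.coe_one, smul_coe,
        mul_one]
    rw [smul_mul_smul_comm, hsq, smul_smul, mul_neg, ← mul_inv,
      inv_mul_cancel₀ (mul_ne_zero hnorm hnorm), neg_one_smul]

lemma star_eq_neg_of_mul_self_eq_neg_one {u : ℍ[ℝ]} (hu : u * u = -1) : star u = -u := by
  have hnorm : normSq u = 1 := by
    have hmul : normSq u * normSq u = 1 * 1 := by
      rw [← map_mul, hu, normSq_neg, map_one, one_mul]
    exact (mul_self_inj normSq_nonneg zero_le_one).mp hmul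
  rw [star_eq_neg, ← sq_eq_neg_normSq, hnorm, sq, hu, Quaternion.coe_one]

/-- The embedding of `ℂ` onto the slice `ℝ + ℝu` of the quaternions, for an imaginary unit `u`. -/
noncomputable def sliceEmbedding (u : ℍ[ℝ]) (hu : u * u = -1) : ℂ →⋆ₐ[ℝ] ℍ[ℝ] where
  __ := Complex.liftAux u hu
  map_star' z := by
    change Complex.liftAux u hu (star z) = star (Complex.liftAux u hu z)
    rw [Complex.liftAux_apply, Complex.liftAux_apply, star_add, Quaternion.star_smul,
      star_eq_neg_of_mul_self_eq_neg_one hu]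
    simp

lemma sliceEmbedding_apply (u : ℍ[ℝ]) (hu : u * u = -1) (z : ℂ) :
    sliceEmbedding u hu z = z.re + z.im • u :=
  rfl

lemma exists_sliceEmbedding_apply_eq (q : ℍ[ℝ]) :
    ∃ (u : ℍ[ℝ]) (hu : u * u = -1), sliceEmbedding u hu ⟨q.re, ‖q.im‖⟩ = q := by
  obtain ⟨u, hu, hq⟩ := exists_mul_self_eq_neg_one_and_smul_eq_im q
  exact ⟨u, hu, by rw [sliceEmbedding_apply, hq, re_add_im]⟩

theorem aeval_mul_star_aeval (p : ℝ[X]) (q : ℍ[ℝ]) :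
    aeval q p * star (aeval q p) =
      (Complex.normSq (aeval (⟨q.re, ‖q.im‖⟩ : ℂ) p) : ℍ[ℝ]) := by
  obtain ⟨u, hu, hq⟩ := exists_sliceEmbedding_apply_eq q
  set z : ℂ := ⟨q.re, ‖q.im‖⟩
  have hp : aeval q p = sliceEmbedding u hu (aeval z p) := by
    rw [← aeval_algHom_apply, hq]
  rw [hp, ← map_star, ← map_mul, Complex.star_def, Complex.mul_conj]
  exact AlgHomClass.commutes (sliceEmbedding u hu) _

end Slice

lemma inv_bn (s : ℝ) (n : ℕ) :
    (bn s n)⁻¹ = (1 - s) / (π * √s) * (((1 - s) / (1 + s) / 2) ^ n / n.factorial) := by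
  rw [bn, mul_inv, mul_inv, inv_div, ← inv_pow, inv_div, div_div, mul_comm (1 + s), mul_assoc,
    ← div_eq_mul_inv]

theorem hasSum_inv_bn_mul_normSq_aeval_physHermite {s : ℝ} (hs0 : 0 < s) (hs1 : s ≠ 1) (z : ℂ) :
    HasSum (fun n : ℕ ↦ (bn s n)⁻¹ * Complex.normSq (aeval z (physHermite n)))
      ((1 - s ^ 2) / (2 * π * s) * exp ((1 - s) * z.re ^ 2 + (1 - s) / s * z.im ^ 2)) := by
  have hratio : |(1 - s) / (1 + s)| < 1 := by
    rw [abs_lt, lt_div_iff₀ (by positivity), div_lt_one (by positivity)]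
    constructor <;> linarith
  have hsqrt : √(1 - ((1 - s) / (1 + s)) ^ 2) = 2 * √s / (1 + s) := by
    rw [sqrt_eq_iff_mul_self_eq_of_pos (by positivity), div_mul_div_comm, mul_mul_mul_comm,
      mul_self_sqrt hs0.le]
    field_simp
    ring
  have hre : 2 * ((1 - s) / (1 + s)) / (1 + (1 - s) / (1 + s)) = 1 - s := by
    field_simp
    ring
  have him : 2 * ((1 - s) / (1 + s)) / (1 - (1 - s) / (1 + s)) = (1 - s) / s := by
    have hone_sub : 1 - (1 - s) / (1 + s) = 2 * s / (1 + s) := by field_simp; ring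
    rw [hone_sub]
    field_simp
  have hprefactor : (1 - s) / (π * √s) * (2 * √s / (1 + s))⁻¹ = (1 - s ^ 2) / (2 * π * s) := by
    field_simp
    rw [sq_sqrt hs0.le]
    ring
  have hmehler := (hasSum_normSq_aeval_physHermite hratio z).mul_left ((1 - s) / (π * √s))
  simpa only [hsqrt, hre, him, ← mul_assoc, hprefactor, inv_bn] using hmehler

theorem quaternionic_diagonal_kernel_general (s : ℝ) (hs0 : 0 < s) (hs1 : s ≠ 1) (q : ℍ[ℝ]) :
    HasSum
      (fun n : ℕ => (bn s n)⁻¹ •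
        (Polynomial.aeval q (physHermite n) * star (Polynomial.aeval q (physHermite n))))
      (((1 - s ^ 2) / (2 * Real.pi * s) *
          Real.exp ((1 - s) * q.re ^ 2 + (1 - s) / s * ‖q.im‖ ^ 2)) • (1 : ℍ[ℝ])) := by
  simp only [aeval_mul_star_aeval, smul_coe]
  rw [← Quaternion.coe_one, smul_coe, mul_one]
  exact Quaternion.hasSum_coe.mpr
    (hasSum_inv_bn_mul_normSq_aeval_physHermite hs0 hs1 ⟨q.re, ‖q.im‖⟩)

theorem quaternionic_diagonal_kernel (s : ℝ) (hs0 : 0 < s) (hs1 : s < 1) (q : ℍ[ℝ]) :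
    HasSum
      (fun n : ℕ => (bn s n)⁻¹ •
        (Polynomial.aeval q (physHermite n) * star (Polynomial.aeval q (physHermite n))))
      (((1 - s ^ 2) / (2 * Real.pi * s) *
          Real.exp ((1 - s) * q.re ^ 2 + (1 - s) / s * ‖q.im‖ ^ 2)) • (1 : ℍ[ℝ])) :=
  quaternionic_diagonal_kernel_general s hs0 hs1.ne q
end
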